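/- Let K ⊂ ℝ^d be compact, δ : ℝ^d → [0,∞) a distance-like function, R > 0, and 0 ≤ ε ≤ R with sup_{ℝ^d}|δ − d_K| ≤ ε. Then for any bounded Lipschitz χ : ℝ^d → [0,∞), ‖V_{δ,R}(χ) − ∫_{K^{R−ε}} n_δ(x) ⊗ n_δ(x) χ(x − n_δ(x)) dx‖_op ≤ R² ‖χ‖_BL H^d(K^{R+ε} ∖ K^{R−ε}). -/

import Mathlib

open MeasureTheory Metric Filter
open scoped NNReal ENNReal

noncomputable section

abbrev Euc (d : ℕ) := EuclideanSpace ℝ (Fin d)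

/-- A function `δ : ℝ^d → [0,∞)` is distance-like if it is nonnegative, proper
and `δ²` is 1-semiconcave, i.e. `x ↦ ‖x‖² - δ x ^ 2` is convex. -/
def DistanceLike {d : ℕ} (δ : Euc d → ℝ) : Prop :=
  (∀ x, 0 ≤ δ x) ∧
  Tendsto δ (comap (fun x : Euc d => ‖x‖) atTop) atTop ∧
  ConvexOn ℝ Set.univ (fun x : Euc d => ‖x‖ ^ 2 - δ x ^ 2)

/-- `n_δ(x) := (1/2) ∇(δ²)(x)` (junk value where `δ²` is not differentiable). -/
def nvec {d : ℕ} (δ : Euc d → ℝ) (x : Euc d) : Euc d :=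
  (1 / 2 : ℝ) • gradient (fun y => δ y ^ 2) x

/-- The tensor product `v ⊗ w`, as the linear map `u ↦ ⟪w, u⟫ • v`. -/
def tensor {d : ℕ} (v w : Euc d) : Euc d →L[ℝ] Euc d :=
  (ContinuousLinearMap.toSpanSingleton ℝ v).comp (innerSL ℝ w)

/-- The δ-Voronoi covariance measure `V_{δ,R}(χ)`. -/
def VCM {d : ℕ} (δ : Euc d → ℝ) (R : ℝ) (χ : Euc d → ℝ) : Euc d →L[ℝ] Euc d :=
  ∫ x in {y : Euc d | δ y ≤ R}, χ (x - nvec δ x) • tensor (nvec δ x) (nvec δ x)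

theorem nvec_norm_le {d : ℕ} (δ : Euc d → ℝ) (hδ : DistanceLike δ) (x : Euc d) :
    ‖nvec δ x‖ ≤ δ x := by
  obtain ⟨h0, -, hc⟩ := hδ
  by_cases hd : DifferentiableAt ℝ (fun y => δ y ^ 2) x
  · have hg := hd.hasGradientAt.hasFDerivAt
    set n := nvec δ x with hn
    have hgn : gradient (fun y => δ y ^ 2) x = (2 : ℝ) • n := by
      rw [hn, nvec, smul_smul]; norm_num
    rw [hgn] at hg
    -- one-dimensional restriction
    set φ : ℝ → ℝ := fun t => ‖x + t • (-n)‖ ^ 2 - δ (x + t • (-n)) ^ 2 with hφ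
    have hφc : ConvexOn ℝ Set.univ φ := by
      have := hc.comp_affineMap (AffineMap.lineMap (k := ℝ) x (x - n))
      have e : φ = (fun x : Euc d => ‖x‖ ^ 2 - δ x ^ 2) ∘
          (AffineMap.lineMap (k := ℝ) x (x - n)) := by
        funext t
        have e1 : AffineMap.lineMap (k := ℝ) x (x - n) t = x + t • (-n) := by
          simp [AffineMap.lineMap_apply, add_comm]
        simp only [hφ, Function.comp_apply, e1]
      rw [e]; simpa using this
    have hl : HasDerivAt (fun t : ℝ => x + t • (-n)) (-n) 0 := by
      simpa using ((hasDerivAt_id (0 : ℝ)).smul_const (-n)).const_add x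
    have h1 : HasDerivAt (fun t : ℝ => δ (x + t • (-n)) ^ 2) (-(2 * ‖n‖ ^ 2)) 0 := by
      have hg' : HasFDerivAt (fun y => δ y ^ 2)
          ((InnerProductSpace.toDual ℝ (Euc d)) ((2 : ℝ) • n)) (x + (0 : ℝ) • (-n)) := by
        simpa using hg
      have := hg'.comp_hasDerivAt (0 : ℝ) hl
      refine this.congr_deriv ?_
      simp [inner_smul_left, real_inner_self_eq_norm_sq]
    have h2 : HasDerivAt (fun t : ℝ => ‖x + t • (-n)‖ ^ 2) (-(2 * inner ℝ x n)) 0 := by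
      have := hl.norm_sq
      refine this.congr_deriv ?_
      simp [inner_neg_right]
    have hφd : HasDerivAt φ (-(2 * inner ℝ x n) - -(2 * ‖n‖ ^ 2)) 0 := h2.sub h1
    have := hφc.le_slope_of_hasDerivAt (Set.mem_univ 0) (Set.mem_univ 1) one_pos hφd
    have e2 : ‖x + -n‖ ^ 2 = ‖x‖ ^ 2 - 2 * inner ℝ x n + ‖n‖ ^ 2 := by
      rw [← sub_eq_add_neg, norm_sub_sq_real]
    simp only [slope_def_field, hφ, one_smul, zero_smul, add_zero, sub_zero, div_one, e2] at this
    have h3 := sq_nonneg (δ (x + -n))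
    exact le_of_sq_le_sq (by nlinarith) (h0 x)
  · rw [nvec, gradient_eq_zero_of_not_differentiableAt hd]; simpa using h0 x

theorem DistanceLike.cont {d : ℕ} {δ : Euc d → ℝ} (hδ : DistanceLike δ) : Continuous δ := by
  obtain ⟨h0, -, hc⟩ := hδ
  have h1 : Continuous (fun x : Euc d => ‖x‖ ^ 2 - δ x ^ 2) :=
    continuousOn_univ.1 (hc.continuousOn isOpen_univ)
  have h2 : δ = fun x => Real.sqrt (‖x‖ ^ 2 - (‖x‖ ^ 2 - δ x ^ 2)) := by
    funext x; rw [sub_sub_cancel, Real.sqrt_sq (h0 x)]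
  rw [h2]
  exact ((continuous_norm.pow 2).sub h1).sqrt

theorem nvec_meas {d : ℕ} (δ : Euc d → ℝ) : Measurable (nvec δ) := by
  unfold nvec gradient
  exact ((InnerProductSpace.toDual ℝ (Euc d)).symm.continuous.measurable.comp
    (measurable_fderiv ℝ (fun y => δ y ^ 2))).const_smul (1 / 2 : ℝ)

theorem tensor_norm_le {d : ℕ} (v : Euc d) : ‖tensor v v‖ ≤ ‖v‖ ^ 2 := by
  unfold tensor
  refine (ContinuousLinearMap.opNorm_comp_le _ _).trans ?_
  rw [ContinuousLinearMap.norm_toSpanSingleton, innerSL_apply_norm, sq]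

theorem tensor_cont {d : ℕ} : Continuous (fun v : Euc d => tensor v v) := by
  unfold tensor
  refine Continuous.clm_comp ?_ (innerSL ℝ).continuous
  exact (ContinuousLinearMap.toSpanSingletonLE ℝ ℝ (Euc d)).toLinearMap.continuous_of_finiteDimensional

/-- Truncating the domain of integration of `V_{δ,R}(χ)` from `δ^R` to `K^{R-ε}` changes
it by at most `R² ‖χ‖_BL H^d(K^{R+ε} \ K^{R-ε})` when `sup |δ - d_K| ≤ ε ≤ R`; the BL
norm `sup|χ| + Lip(χ)` is represented by `Cb + L`. -/
theorem stmt11 {d : ℕ} (K : Set (Euc d)) (hK : IsCompact K) (hKne : K.Nonempty)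
    (δ : Euc d → ℝ) (hδ : DistanceLike δ)
    (R ε : ℝ) (hR : 0 < R) (hε0 : 0 ≤ ε) (hεR : ε ≤ R)
    (hclose : ∀ x, |δ x - infDist x K| ≤ ε)
    (χ : Euc d → ℝ) (hχ0 : ∀ x, 0 ≤ χ x) (Cb : ℝ) (L : ℝ≥0)
    (hCb : ∀ x, |χ x| ≤ Cb) (hL : LipschitzWith L χ) :
    ‖VCM δ R χ -
        ∫ x in {y : Euc d | infDist y K ≤ R - ε},
          χ (x - nvec δ x) • tensor (nvec δ x) (nvec δ x)‖ ≤
      R ^ 2 * (Cb + (L : ℝ)) *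
        (volume ({y : Euc d | infDist y K ≤ R + ε} \
          {y : Euc d | infDist y K ≤ R - ε})).toReal := by
  have hn := nvec_norm_le δ hδ
  set A := {y : Euc d | δ y ≤ R} with hA
  set B := {y : Euc d | infDist y K ≤ R - ε} with hB
  set C := {y : Euc d | infDist y K ≤ R + ε} with hC
  have hBA : B ⊆ A := by
    intro y hy
    have := abs_le.1 (hclose y)
    simp only [hA, hB, Set.mem_setOf_eq] at hy ⊢
    linarith
  have hAC : A ⊆ C := by
    intro y hy
    have := abs_le.1 (hclose y)
    simp only [hA, hC, Set.mem_setOf_eq] at hy ⊢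
    linarith
  have hCfin : volume C < ∞ := by
    have hb : Bornology.IsBounded C := by
      refine (hK.isBounded.cthickening (δ := R + ε)).subset ?_
      intro y hy
      obtain ⟨k, hk, hk'⟩ := hK.exists_infDist_eq_dist hKne y
      exact mem_cthickening_of_dist_le y k _ _ hk (hk' ▸ hy)
    exact hb.measure_lt_top
  have hAm : MeasurableSet A := (isClosed_le hδ.cont continuous_const).measurableSet
  have hBm : MeasurableSet B :=
    (isClosed_le (continuous_infDist_pt K) continuous_const).measurableSet
  have hCb0 : 0 ≤ Cb := (abs_nonneg _).trans (hCb 0)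
  have hbd : ∀ x ∈ A, ‖χ (x - nvec δ x) • tensor (nvec δ x) (nvec δ x)‖ ≤ R ^ 2 * (Cb + L) := by
    intro x hx
    have h1 : ‖nvec δ x‖ ^ 2 ≤ R ^ 2 :=
      pow_le_pow_left₀ (norm_nonneg _) ((hn x).trans hx) 2
    have h2 := (tensor_norm_le (nvec δ x)).trans h1
    rw [norm_smul, mul_comm]
    refine mul_le_mul h2 ?_ (norm_nonneg _) (sq_nonneg _)
    exact (hCb _).trans (by simp)
  have hmeas : AEStronglyMeasurable
      (fun x => χ (x - nvec δ x) • tensor (nvec δ x) (nvec δ x)) (volume : Measure (Euc d)) := by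
    have m1 : AEStronglyMeasurable (fun x => χ (x - nvec δ x)) (volume : Measure (Euc d)) :=
      (hL.continuous.measurable.comp
        (measurable_id.sub (nvec_meas δ))).aestronglyMeasurable
    have m2 : AEStronglyMeasurable (fun x => tensor (nvec δ x) (nvec δ x))
        (volume : Measure (Euc d)) :=
      (tensor_cont.comp_stronglyMeasurable
        (nvec_meas δ).stronglyMeasurable).aestronglyMeasurable
    exact m1.smul m2
  have hint : IntegrableOn
      (fun x => χ (x - nvec δ x) • tensor (nvec δ x) (nvec δ x)) A volume := by
    refine Measure.integrableOn_of_bounded (M := R ^ 2 * (Cb + L))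
      ((measure_mono hAC).trans_lt hCfin).ne hmeas ?_
    exact (ae_restrict_iff' hAm).2 (Eventually.of_forall hbd)
  unfold VCM
  rw [← setIntegral_diff hBm hint hBA]
  have hsub : A \ B ⊆ C \ B := Set.diff_subset_diff_left hAC
  have hCBfin : volume (C \ B) < ∞ := (measure_mono Set.diff_subset).trans_lt hCfin
  refine (norm_setIntegral_le_of_norm_le_const ((measure_mono hsub).trans_lt hCBfin)
    (fun x hx => hbd x hx.1)).trans ?_
  refine mul_le_mul_of_nonneg_left ?_ (by positivity)
  exact ENNReal.toReal_mono hCBfin.ne (measure_mono hsub)
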